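/- If ω ∈ (D_b^m)^{ℕ₀} is a totally distinct sequence, then the survivor set K^ω is (log η / log b)-Ahlfors regular, where η is the unique root in (b−1, b) of x^m − b x^{m−1} + 1 = 0. -/

import Mathlib

/-!
Put `q = η⁻¹`, so that `b = q⁻¹ + q ^ (m - 1)` and `b ^ (-s) = q` for `s = log η / log b`.

Give an admissible word of length `k` the weight `wt = g · q ^ k`, where `g` equals `1` minus
`q ^ (m - ℓ)` for each forbidden word `ω^i` of which exactly the first `ℓ ≥ 1` letters have been
spelled at the end of the word. Total distinctness says that once a forbidden word is completed, no
other one can be partially spelled. This makes the weight of a word equal to the sum of the weights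
of its one-letter admissible extensions (`sum_wt`). Since the exponents `m - ℓ` are distinct and
`q < 1 / 2`, the factor `g` lies between the positive constant `1 - q / (1 - q)` and `1`
(`le_gfun`, `gfun_le_one`), so weights at level `k` are comparable to `q ^ k = (b ^ (-k)) ^ s`.

Thus the weight is a mass distribution on the cylinders of the survivor set that is comparable to
the `s`-th power of their diameters. Covering by small cylinders bounds the Hausdorff measure of a
cylinder above by its weight (`hausdorff_Cyl_le`), and the mass distribution principle bounds it
below (`le_hausdorff_Cyl`), each up to a constant. A ball of radius `r` meets at most four cylinders
of a level with `b ^ (-n)` comparable to `r` (`outer_le_four`), and contains a cylinder of the next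
level.
-/

open MeasureTheory Filter

namespace Paper


/-- The set `Σ_k^ω` of admissible words of length `k`. -/
def SigmaSet (b m : ℕ) (ω : ℕ → Fin m → Fin b) (k : ℕ) : Set (Fin k → Fin b) :=
  { d | ∀ (i : ℕ) (hi : i + m ≤ k),
      (fun j : Fin m => d ⟨i + j.1, by have := j.isLt; omega⟩) ≠ ω i }

/-- The survivor set `K^ω ⊆ [0,1]`. -/
def Kset (b m : ℕ) (ω : ℕ → Fin m → Fin b) : Set ℝ :=
  { x | ∃ d : ℕ → Fin b,
      (∀ k : ℕ, (fun j : Fin m => d (k + j.1)) ≠ ω k) ∧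
      x = ∑' i : ℕ, ((d i : ℕ) : ℝ) / (b : ℝ) ^ (i + 1) }

open Classical in
/-- The adjacency matrix `A_d` of the subshift of finite type with forbidden word `d`. -/
noncomputable def adjMat (b m : ℕ) (d : Fin m → Fin b) :
    Matrix (Fin (m - 1) → Fin b) (Fin (m - 1) → Fin b) ℝ :=
  fun u v =>
    if ((∀ (i : ℕ) (h : i + 1 < m - 1), u ⟨i + 1, h⟩ = v ⟨i, by omega⟩) ∧
        ¬ ((∀ (j : ℕ) (h : j < m - 1), u ⟨j, h⟩ = d ⟨j, by omega⟩) ∧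
           (∀ (h2 : m - 2 < m - 1), v ⟨m - 2, h2⟩ = d ⟨m - 1, by omega⟩)))
    then 1 else 0

/-- The norm `‖M‖ = ∑_{i,j} |m_{ij}|` of a real square matrix. -/
noncomputable def matNorm {n : Type*} [Fintype n] (M : Matrix n n ℝ) : ℝ :=
  ∑ i, ∑ j, |M i j|

/-- The product `A_{ω^0} A_{ω^1} ⋯ A_{ω^{n-1}}`. -/
noncomputable def prodA (b m : ℕ) (ω : ℕ → Fin m → Fin b) (n : ℕ) :
    Matrix (Fin (m - 1) → Fin b) (Fin (m - 1) → Fin b) ℝ :=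
  ((List.range n).map (fun i => adjMat b m (ω i))).prod

/-- `ω` is progressively overlapping at position `k`. -/
def ProgOverlapAt (b m : ℕ) (ω : ℕ → Fin m → Fin b) (k : ℕ) : Prop :=
  ∀ j : ℕ, 1 ≤ j → j ≤ min k (m - 1) →
    ∀ (t : ℕ) (h : t + j < m),
      ω k ⟨t, by omega⟩ = ω (k - j) ⟨t + j, h⟩

/-- `ω` is totally distinct at position `k`. -/
def TotDistinctAt (b m : ℕ) (ω : ℕ → Fin m → Fin b) (k : ℕ) : Prop :=
  ∀ j : ℕ, 1 ≤ j → j ≤ min k (m - 1) →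
    ¬ (∀ (t : ℕ) (h : t + j < m),
        ω k ⟨t, by omega⟩ = ω (k - j) ⟨t + j, h⟩)

/-- A set `F ⊆ ℝ` is `s`-Ahlfors regular. -/
def AhlforsRegular (F : Set ℝ) (s : ℝ) : Prop :=
  ∃ c : ℝ, 1 ≤ c ∧ ∀ x ∈ F, ∀ r : ℝ, 0 < r → r < 1 →
    ENNReal.ofReal (c⁻¹ * r ^ s) ≤ Measure.hausdorffMeasure s (F ∩ Metric.closedBall x r) ∧
    Measure.hausdorffMeasure s (F ∩ Metric.closedBall x r) ≤ ENNReal.ofReal (c * r ^ s)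


/-! ### Weights of admissible words -/

section Weights

variable {b m : ℕ}

/-- The first `k` digits of `d` avoid every forbidden word: `d₀ … d_{k-1} ∈ Σ_k^ω`. Finite words
are encoded throughout as infinite sequences of which only the first `k` digits matter. -/
def Adm (ω : ℕ → Fin m → Fin b) (k : ℕ) (d : ℕ → Fin b) : Prop :=
  ∀ i : ℕ, i + m ≤ k → (fun j : Fin m => d (i + j.1)) ≠ ω i

/-- The digits of `d` at positions `i, …, min (i + m) k - 1` agree with the beginning of the
forbidden word `ω^i`. -/
def Match (ω : ℕ → Fin m → Fin b) (i k : ℕ) (d : ℕ → Fin b) : Prop :=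
  ∀ j : Fin m, i + j.1 < k → d (i + j.1) = ω i j

open Classical in
/-- The weight factor of the word `d₀ … d_{k-1}`: each forbidden word that is currently `ℓ` letters
into being spelled costs `q ^ (m - ℓ)`. A forbidden word completed exactly at time `k` costs `1`. -/
noncomputable def gfun (q : ℝ) (ω : ℕ → Fin m → Fin b) (k : ℕ) (d : ℕ → Fin b) : ℝ :=
  1 - ∑ i ∈ Finset.range k, if k ≤ i + m ∧ Match ω i k d then q ^ (i + m - k) else 0

open Classical in
/-- The mass given to the cylinder of the word `d₀ … d_{k-1}`. -/
noncomputable def wt (q : ℝ) (ω : ℕ → Fin m → Fin b) (k : ℕ) (d : ℕ → Fin b) : ℝ :=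
  if Adm ω k d then gfun q ω k d * q ^ k else 0

variable {ω : ℕ → Fin m → Fin b} {q : ℝ} {k : ℕ} {d d' : ℕ → Fin b}

lemma Adm.mono {n : ℕ} (h : Adm ω n d) (hk : k ≤ n) : Adm ω k d :=
  fun i hi => h i (hi.trans hk)

lemma Adm.congr (h : ∀ i < k, d i = d' i) (hd : Adm ω k d) : Adm ω k d' := by
  intro i hi he
  apply hd i hi
  rw [← he]
  funext j
  exact h _ (by have := j.isLt; omega)

lemma adm_congr (h : ∀ i < k, d i = d' i) : Adm ω k d ↔ Adm ω k d' :=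
  ⟨Adm.congr h, Adm.congr fun i hi => (h i hi).symm⟩

lemma match_congr {i : ℕ} (h : ∀ i < k, d i = d' i) : Match ω i k d ↔ Match ω i k d' := by
  constructor
  · intro H j hj
    rw [← h _ hj]; exact H j hj
  · intro H j hj
    rw [h _ hj]; exact H j hj

lemma gfun_congr (h : ∀ i < k, d i = d' i) : gfun q ω k d = gfun q ω k d' := by
  classical
  exact congrArg (1 - ·) (Finset.sum_congr rfl fun i _ => if_congr (by rw [match_congr h]) rfl rfl)

lemma wt_congr (h : ∀ i < k, d i = d' i) : wt q ω k d = wt q ω k d' := by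
  classical
  rw [wt, wt, gfun_congr h]
  exact if_congr (adm_congr h) rfl rfl

lemma match_update {i : ℕ} (hik : i ≤ k) (hk : k + 1 ≤ i + m) (a : Fin b) :
    Match ω i (k + 1) (Function.update d k a) ↔
      Match ω i k d ∧ a = ω i ⟨k - i, by omega⟩ := by
  constructor
  · intro H
    refine ⟨fun j hj => ?_, ?_⟩
    · have := H j (by omega)
      rwa [Function.update_of_ne (by omega)] at this
    · have := H ⟨k - i, by omega⟩ (by simp; omega)
      have e : i + (k - i) = k := by omega
      simpa [e] using this
  · rintro ⟨H, rfl⟩ j hj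
    rcases Nat.lt_succ_iff_lt_or_eq.1 hj with h | h
    · rw [Function.update_of_ne (by omega)]; exact H j h
    · rw [h, Function.update_self]
      congr 1
      ext
      simp; omega

lemma adm_update (a : Fin b) :
    Adm ω (k + 1) (Function.update d k a) ↔
      Adm ω k d ∧ ¬ (m ≤ k + 1 ∧ Match ω (k + 1 - m) (k + 1) (Function.update d k a)) := by
  have hc : Adm ω k (Function.update d k a) ↔ Adm ω k d :=
    adm_congr fun i hi => Function.update_of_ne (by omega) _ _
  constructor
  · intro H
    refine ⟨hc.1 (H.mono (by omega)), ?_⟩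
    rintro ⟨h1, h2⟩
    refine H (k + 1 - m) (by omega) (funext fun j => h2 j ?_)
    have := j.isLt; omega
  · rintro ⟨H1, H2⟩ i hi he
    rcases Nat.lt_succ_iff_lt_or_eq.1 (Nat.lt_succ_of_le hi) with h | h
    · exact hc.2 H1 i (by omega) he
    · refine H2 ⟨by omega, ?_⟩
      obtain rfl : i = k + 1 - m := by omega
      exact fun j _ => congrFun he j

/-- A word that ends in a forbidden word has weight factor `0`: that forbidden word costs `1`, and
total distinctness prevents any later one from having been started. -/
lemma gfun_eq_zero (hm : 2 ≤ m) (hω : ∀ k : ℕ, 1 ≤ k → TotDistinctAt b m ω k)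
    (hk : m ≤ k) (hM : Match ω (k - m) k d) : gfun q ω k d = 0 := by
  rw [gfun, Finset.sum_eq_single (k - m)]
  · have e : k - m + m - k = 0 := by omega
    rw [if_pos ⟨by omega, hM⟩, e]; simp
  · intro i hi hne
    rw [Finset.mem_range] at hi
    rw [if_neg]
    rintro ⟨h1, h2⟩
    refine hω i (by omega) (i - (k - m)) (by omega) (by omega) fun t ht => ?_
    have e : i - (i - (k - m)) = k - m := by omega
    have e2 : k - m + (t + (i - (k - m))) = i + t := by omega
    rw [← h2 ⟨t, by omega⟩ (by simp only; omega)]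
    have := hM ⟨t + (i - (k - m)), ht⟩ (by simp only; omega)
    simp only [e2] at this
    simp only [e]
    exact this
  · intro h
    simp only [Finset.mem_range] at h
    omega

/-- The eigenvector equation for the weight factor, with eigenvalue `q⁻¹ = b - q^(m-1)`. The sum
may run over all one-letter extensions, since the forbidden ones have weight factor `0`. -/
lemma sum_gfun (hm : 2 ≤ m) (hq : q ≠ 0) (heq : (b : ℝ) = q⁻¹ + q ^ (m - 1)) (hd : Adm ω k d) :
    ∑ a : Fin b, gfun q ω (k + 1) (Function.update d k a) = q⁻¹ * gfun q ω k d := by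
  classical
  simp only [gfun]
  rw [Finset.sum_sub_distrib, Finset.sum_comm]
  have h1 : ∀ i ∈ Finset.range (k + 1),
      (∑ a : Fin b, if k + 1 ≤ i + m ∧ Match ω i (k + 1) (Function.update d k a)
        then q ^ (i + m - (k + 1)) else 0) =
      if k + 1 ≤ i + m ∧ Match ω i k d then q ^ (i + m - (k + 1)) else 0 := by
    intro i hi
    rw [Finset.mem_range] at hi
    by_cases hk : k + 1 ≤ i + m
    · simp only [hk, true_and, match_update (Nat.lt_succ_iff.1 hi) hk]
      by_cases hM : Match ω i k d <;> simp [hM]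
    · simp [hk]
  rw [Finset.sum_congr rfl h1, Finset.sum_range_succ]
  have hMk : Match ω k k d := fun j hj => by omega
  have e : k + m - (k + 1) = m - 1 := by omega
  rw [if_pos ⟨by omega, hMk⟩, e]
  have h2 : ∑ i ∈ Finset.range k, (if k + 1 ≤ i + m ∧ Match ω i k d
        then q ^ (i + m - (k + 1)) else 0) =
      q⁻¹ * ∑ i ∈ Finset.range k, (if k ≤ i + m ∧ Match ω i k d then q ^ (i + m - k) else 0) := by
    rw [Finset.mul_sum]
    refine Finset.sum_congr rfl fun i hi => ?_
    by_cases hM : Match ω i k d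
    · by_cases hk : k + 1 ≤ i + m
      · rw [if_pos ⟨hk, hM⟩, if_pos ⟨by omega, hM⟩]
        have e : i + m - k = (i + m - (k + 1)) + 1 := by omega
        rw [e, pow_succ]; field_simp
      · -- A forbidden word ending exactly at `k` would contradict admissibility.
        have : ¬ k ≤ i + m := by
          intro h
          exact hd i (by omega) (funext fun j => hM j (by have := j.isLt; omega))
        simp [hk, this]
    · simp [hM]
  rw [h2]
  simp only [Finset.sum_const, Finset.card_univ, Fintype.card_fin, nsmul_eq_mul, mul_one]
  rw [heq]; ring

lemma sum_wt (hm : 2 ≤ m) (hω : ∀ k : ℕ, 1 ≤ k → TotDistinctAt b m ω k)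
    (hq : q ≠ 0) (heq : (b : ℝ) = q⁻¹ + q ^ (m - 1)) (k : ℕ) (d : ℕ → Fin b) :
    ∑ a : Fin b, wt q ω (k + 1) (Function.update d k a) = wt q ω k d := by
  by_cases hd : Adm ω k d
  · have h : ∀ a : Fin b, wt q ω (k + 1) (Function.update d k a) =
        gfun q ω (k + 1) (Function.update d k a) * q ^ (k + 1) := by
      intro a
      by_cases hA : Adm ω (k + 1) (Function.update d k a)
      · rw [wt, if_pos hA]
      · rw [wt, if_neg hA]
        rw [adm_update] at hA
        simp only [hd, true_and, not_not] at hA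
        rw [gfun_eq_zero hm hω hA.1 hA.2, zero_mul]
    simp only [h]
    rw [← Finset.sum_mul, sum_gfun hm hq heq hd, wt, if_pos hd, pow_succ]
    field_simp
  · rw [wt, if_neg hd]
    refine Finset.sum_eq_zero fun a _ => ?_
    rw [wt, if_neg]
    rw [adm_update]
    tauto

lemma gfun_le_one (hq : 0 ≤ q) : gfun q ω k d ≤ 1 := by
  classical
  rw [gfun, sub_le_self_iff]
  refine Finset.sum_nonneg fun i _ => ?_
  split_ifs <;> positivity

/-- The costs charged to an admissible word carry distinct positive exponents, so they add up to
less than `q + q² + ⋯`. -/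
lemma le_gfun (hq : 0 ≤ q) (hq1 : q < 1) (hd : Adm ω k d) :
    1 - q / (1 - q) ≤ gfun q ω k d := by
  classical
  rw [gfun]
  refine sub_le_sub_left ?_ _
  calc _ ≤ ∑ i ∈ Finset.range k with k < i + m, q ^ (i + m - k) := by
        rw [Finset.sum_filter]
        refine Finset.sum_le_sum fun i _ => ?_
        by_cases hM : k ≤ i + m ∧ Match ω i k d
        · have : k < i + m := by
            by_contra h
            exact hd i (by omega) (funext fun j => hM.2 j (by have := j.isLt; omega))
          rw [if_pos hM, if_pos this]
        · rw [if_neg hM]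
          split_ifs <;> positivity
    _ = ∑ j ∈ ((Finset.range k).filter (k < · + m)).image (fun i => i + m - k), q ^ j := by
        rw [Finset.sum_image]
        intro i hi i' hi' h
        simp only [Finset.coe_filter, Finset.mem_range, Set.mem_ofPred_eq] at hi hi' h
        omega
    _ ≤ ∑ j ∈ Finset.Ico 1 m, q ^ j := by
        refine Finset.sum_le_sum_of_subset_of_nonneg ?_ fun _ _ _ => by positivity
        intro j hj
        simp only [Finset.mem_image, Finset.mem_filter, Finset.mem_range, Finset.mem_Ico] at hj ⊢
        omega
    _ ≤ q ^ 1 / (1 - q) := geom_sum_Ico_le_of_lt_one hq hq1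
    _ = q / (1 - q) := by rw [pow_one]

lemma wt_le (hq : 0 ≤ q) : wt q ω k d ≤ q ^ k := by
  rw [wt]
  split_ifs
  · exact mul_le_of_le_one_left (by positivity) (gfun_le_one hq)
  · positivity

lemma le_wt (hq : 0 ≤ q) (hq1 : q < 1) (hd : Adm ω k d) :
    (1 - q / (1 - q)) * q ^ k ≤ wt q ω k d := by
  rw [wt, if_pos hd]
  exact mul_le_mul_of_nonneg_right (le_gfun hq hq1 hd) (by positivity)

lemma wt_nonneg (hq : 0 ≤ q) (hq2 : q < 1 / 2) : 0 ≤ wt q ω k d := by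
  by_cases hd : Adm ω k d
  · refine le_trans ?_ (le_wt hq (by linarith) hd)
    have : q / (1 - q) ≤ 1 := by rw [div_le_one (by linarith)]; linarith
    exact mul_nonneg (by linarith) (by positivity)
  · rw [wt, if_neg hd]

end Weights

/-! ### Intervals assigned to words -/

section Intervals

variable {b m : ℕ} {ω : ℕ → Fin m → Fin b} {q : ℝ} {k : ℕ} {d d' : ℕ → Fin b}

/-- Left endpoint of the interval of length `wt q ω k d` assigned to the word `d₀ … d_{k-1}`. The
intervals of the children of a word tile the interval of that word, in the order of the last
digit. -/
noncomputable def lft (q : ℝ) (ω : ℕ → Fin m → Fin b) (k : ℕ) (d : ℕ → Fin b) : ℝ :=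
  ∑ j ∈ Finset.range k, ∑ a ∈ Finset.univ.filter (· < d j), wt q ω (j + 1) (Function.update d j a)

/-- The half-open interval assigned to the word `d₀ … d_{k-1}`. -/
def Jint (q : ℝ) (ω : ℕ → Fin m → Fin b) (k : ℕ) (d : ℕ → Fin b) : Set ℝ :=
  Set.Ico (lft q ω k d) (lft q ω k d + wt q ω k d)

lemma lft_congr (h : ∀ i < k, d i = d' i) : lft q ω k d = lft q ω k d' := by
  refine Finset.sum_congr rfl fun j hj => ?_
  rw [Finset.mem_range] at hj
  rw [h j hj]
  refine Finset.sum_congr rfl fun a _ => wt_congr fun i hi => ?_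
  rcases Nat.lt_succ_iff_lt_or_eq.1 hi with h' | rfl
  · rw [Function.update_of_ne (by omega), Function.update_of_ne (by omega), h i (by omega)]
  · simp

lemma Jint_congr (h : ∀ i < k, d i = d' i) : Jint q ω k d = Jint q ω k d' := by
  rw [Jint, Jint, lft_congr h, wt_congr h]

lemma lft_update (a : Fin b) : lft q ω (k + 1) (Function.update d k a) =
    lft q ω k d + ∑ a' ∈ Finset.univ.filter (· < a), wt q ω (k + 1) (Function.update d k a') := by
  have h : lft q ω k (Function.update d k a) = lft q ω k d :=
    lft_congr fun i hi => Function.update_of_ne (by omega) _ _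
  rw [← h, lft, lft, Finset.sum_range_succ]
  simp

lemma volume_Jint : volume (Jint q ω k d) = ENNReal.ofReal (wt q ω k d) := by
  rw [Jint, Real.volume_Ico]; congr 1; ring

lemma exists_partial_sum_mem {α : Type*} [Fintype α] [LinearOrder α] (f : α → ℝ) {s t : ℝ}
    (h1 : s ≤ t) (h2 : t < s + ∑ a, f a) :
    ∃ a, s + ∑ a' ∈ Finset.univ.filter (· < a), f a' ≤ t ∧
      t < s + ∑ a' ∈ Finset.univ.filter (· < a), f a' + f a := by
  have hsum : ∀ a, ∑ a' ∈ Finset.univ.filter (· ≤ a), f a' =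
      ∑ a' ∈ Finset.univ.filter (· < a), f a' + f a := by
    intro a
    have : Finset.univ.filter (· ≤ a) = insert a (Finset.univ.filter (· < a)) := by
      ext x; simp [le_iff_eq_or_lt]
    rw [this, Finset.sum_insert (by simp), add_comm]
  let P : Finset α := Finset.univ.filter fun a => t < s + ∑ a' ∈ Finset.univ.filter (· ≤ a), f a'
  have hne : (Finset.univ : Finset α).Nonempty := by
    by_contra h
    rw [Finset.not_nonempty_iff_eq_empty] at h
    rw [h] at h2
    simp at h2; linarith
  have hP : P.Nonempty := by
    refine ⟨Finset.univ.max' hne, ?_⟩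
    have : Finset.univ.filter (· ≤ Finset.univ.max' hne) = Finset.univ := by
      ext x; simp [Finset.le_max']
    simp only [P, Finset.mem_filter, Finset.mem_univ, true_and, this]
    exact h2
  have ha := P.min'_mem hP
  set a := P.min' hP with hadef
  refine ⟨a, ?_, ?_⟩
  · by_contra! hlt
    have hne' : (Finset.univ.filter (· < a)).Nonempty := by
      by_contra h
      rw [Finset.not_nonempty_iff_eq_empty] at h
      rw [h] at hlt
      simp at hlt; linarith
    have hmem := (Finset.univ.filter (· < a)).max'_mem hne'
    set c := (Finset.univ.filter (· < a)).max' hne' with hc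
    have hca : c < a := by simpa using hmem
    have heq : Finset.univ.filter (· < a) = Finset.univ.filter (· ≤ c) := by
      ext x
      simp only [Finset.mem_filter, Finset.mem_univ, true_and]
      exact ⟨fun hx => Finset.le_max' _ _ (by simpa using hx), fun hx => hx.trans_lt hca⟩
    rw [heq] at hlt
    have : c ∈ P := by simpa [P] using hlt
    exact absurd (P.min'_le c this) (not_le.2 hca)
  · simp only [P, Finset.mem_filter, Finset.mem_univ, true_and, hsum] at ha
    linarith

/-- Every point of the interval of a word lies in a nested sequence of intervals of words
extending it. -/
lemma exists_digits (hsum : ∀ (k : ℕ) (d : ℕ → Fin b),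
      ∑ a : Fin b, wt q ω (k + 1) (Function.update d k a) = wt q ω k d)
    {t : ℝ} (ht : t ∈ Jint q ω k d) :
    ∃ d' : ℕ → Fin b, (∀ i < k, d' i = d i) ∧ ∀ n, k ≤ n → t ∈ Jint q ω n d' := by
  have step : ∀ (n : ℕ) (e : ℕ → Fin b), ∃ a : Fin b,
      t ∈ Jint q ω n e → t ∈ Jint q ω (n + 1) (Function.update e n a) := by
    intro n e
    by_cases he : t ∈ Jint q ω n e
    · obtain ⟨h1, h2⟩ := he
      rw [← hsum] at h2
      obtain ⟨a, ha1, ha2⟩ := exists_partial_sum_mem _ h1 h2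
      refine ⟨a, fun _ => ⟨?_, ?_⟩⟩ <;> rw [lft_update] <;> assumption
    · exact ⟨d 0, fun h => absurd h he⟩
  choose A hA using step
  let D : ℕ → ℕ → Fin b := fun n =>
    Nat.rec d (fun n e => Function.update e (k + n) (A (k + n) e)) n
  have hD : ∀ n, D (n + 1) = Function.update (D n) (k + n) (A (k + n) (D n)) := fun n => rfl
  have hJ : ∀ n, t ∈ Jint q ω (k + n) (D n) := by
    intro n
    induction n with
    | zero => exact ht
    | succ n ih => rw [hD]; exact hA _ _ ih
  have hstab : ∀ n n', n ≤ n' → ∀ i < k + n, D n' i = D n i := by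
    intro n n' hn
    induction n', hn using Nat.le_induction with
    | base => intros; rfl
    | succ n' hn ih =>
      intro i hi
      rw [hD, Function.update_of_ne (by omega), ih i hi]
  refine ⟨fun i => D (i + 1) i, fun i hi => hstab 0 (i + 1) (by omega) i (by omega), ?_⟩
  intro n hn
  obtain ⟨l, rfl⟩ := Nat.exists_eq_add_of_le hn
  rw [Jint_congr (d' := D l)]
  · exact hJ l
  · intro i hi
    rcases le_total l (i + 1) with h | h
    · exact hstab _ _ h i hi
    · exact (hstab _ _ h i (by omega)).symm

lemma adm_of_mem_Jint {t : ℝ} (ht : t ∈ Jint q ω k d) : Adm ω k d := by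
  by_contra h
  obtain ⟨h1, h2⟩ := ht
  rw [wt, if_neg h] at h2
  linarith

end Intervals

/-! ### Digit sequences and `b`-adic intervals -/

section Digits

variable {b : ℕ} {d d' : ℕ → Fin b}

/-- The integer with base-`b` digits `d₀ … d_{n-1}`, the leading digit first. -/
def val (n : ℕ) (d : ℕ → Fin b) : ℕ := Nat.rec 0 (fun k v => b * v + (d k : ℕ)) n

lemma val_succ (n : ℕ) : val (n + 1) d = b * val n d + (d n : ℕ) := rfl

lemma eq_of_val_eq {n : ℕ} (h : val n d = val n d') : ∀ i < n, d i = d' i := by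
  induction n with
  | zero => intro i hi; omega
  | succ n ih =>
    rw [val_succ, val_succ] at h
    have h1 : (d n : ℕ) = d' n := by
      have := congrArg (· % b) h
      simpa [Nat.add_mod, Nat.mod_eq_of_lt (d n).isLt, Nat.mod_eq_of_lt (d' n).isLt] using this
    have h2 : val n d = val n d' := by
      rw [h1] at h
      exact Nat.eq_of_mul_eq_mul_left (Fin.pos (d n)) (Nat.add_right_cancel h)
    intro i hi
    rcases Nat.lt_succ_iff_lt_or_eq.1 hi with h' | rfl
    · exact ih h2 i h'
    · exact Fin.ext h1

lemma pow_mul_sum_eq_val (n : ℕ) :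
    (b : ℝ) ^ n * ∑ i ∈ Finset.range n, Real.ofDigitsTerm d i = val n d := by
  have hb : (b : ℝ) ≠ 0 := by exact_mod_cast (Fin.pos (d 0)).ne'
  induction n with
  | zero => simp [val]
  | succ n ih =>
    rw [Finset.sum_range_succ, val_succ, Real.ofDigitsTerm]
    push_cast
    rw [← ih]
    field_simp
    ring

lemma val_le_ofDigits (n : ℕ) : (val n d : ℝ) ≤ b ^ n * Real.ofDigits d ∧
    b ^ n * Real.ofDigits d ≤ val n d + 1 := by
  have hb : (b : ℝ) ^ n ≠ 0 := pow_ne_zero _ (by exact_mod_cast (Fin.pos (d 0)).ne')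
  rw [Real.ofDigits_eq_sum_add_ofDigits d n, mul_add, pow_mul_sum_eq_val, ← mul_assoc,
    mul_inv_cancel₀ hb, one_mul]
  have h1 := Real.ofDigits_nonneg fun i => d (i + n)
  have h2 := Real.ofDigits_le_one fun i => d (i + n)
  constructor <;> linarith

/-- At most four `b`-adic intervals of length `b⁻ⁿ` meet `[y - b⁻ⁿ, y + b⁻ⁿ]`. Hence a set of
points labelled by digit sequences whose values lie within `b⁻ⁿ` of `y` is covered by its parts in
four cylinders of level `n`. -/
lemma outer_le_four {α : Type*} (ν : OuterMeasure α) (E : Set α) (f : α → ℕ → Fin b) {y : ℝ}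
    (hy : 0 ≤ y) (n : ℕ) (hE : ∀ a ∈ E, |Real.ofDigits (f a) - y| ≤ ((b : ℝ) ^ n)⁻¹) (B : ENNReal)
    (hB : ∀ u : ℕ → Fin b, ν (E ∩ {a | ∀ i < n, f a i = u i}) ≤ B) : ν E ≤ 4 * B := by
  set M := ⌊(b : ℝ) ^ n * y⌋₊ with hM
  have hsub : E ⊆ ⋃ N ∈ Finset.Icc M (M + 3), E ∩ {a | val n (f a) + 2 = N} := by
    intro a ha
    have hb : (0 : ℝ) < (b : ℝ) ^ n := pow_pos (by exact_mod_cast (Fin.pos (f a 0))) _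
    simp only [Set.mem_iUnion]
    refine ⟨val n (f a) + 2, ?_, ha, rfl⟩
    obtain ⟨h1, h2⟩ := val_le_ofDigits (d := f a) n
    have h3 : |b ^ n * Real.ofDigits (f a) - b ^ n * y| ≤ 1 := by
      rw [← mul_sub, abs_mul, abs_of_pos hb]
      calc _ ≤ (b : ℝ) ^ n * ((b : ℝ) ^ n)⁻¹ := by gcongr; exact hE a ha
        _ = 1 := mul_inv_cancel₀ hb.ne'
    rw [abs_le] at h3
    have h4 : (M : ℝ) ≤ b ^ n * y := Nat.floor_le (by positivity)
    have h5 : b ^ n * y < M + 1 := Nat.lt_floor_add_one _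
    rw [Finset.mem_Icc]
    constructor
    · have : (M : ℝ) ≤ (val n (f a) + 2 : ℕ) := by push_cast; linarith
      exact_mod_cast this
    · have : ((val n (f a) + 2 : ℕ) : ℝ) < (M + 4 : ℕ) := by push_cast; linarith
      have : val n (f a) + 2 < M + 4 := by exact_mod_cast this
      omega
  calc ν E ≤ _ := measure_mono hsub
    _ ≤ ∑ N ∈ Finset.Icc M (M + 3), ν (E ∩ {a | val n (f a) + 2 = N}) :=
        measure_biUnion_finset_le _ _
    _ ≤ ∑ N ∈ Finset.Icc M (M + 3), B := by
        refine Finset.sum_le_sum fun N _ => ?_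
        by_cases hN : ∃ a ∈ E, val n (f a) + 2 = N
        · obtain ⟨a0, -, h0⟩ := hN
          refine le_trans (measure_mono ?_) (hB (f a0))
          rintro a ⟨ha, haN⟩
          refine ⟨ha, eq_of_val_eq ?_⟩
          simp only [Set.mem_ofPred_eq] at haN
          omega
        · have : E ∩ {a | val n (f a) + 2 = N} = ∅ := by
            ext a
            simp only [Set.mem_inter_iff, Set.mem_ofPred_eq, Set.mem_empty_iff_false, iff_false]
            exact fun h => hN ⟨a, h⟩
          rw [this, measure_empty]
          exact zero_le
    _ = 4 * B := by
        rw [Finset.sum_const, Nat.card_Icc, nsmul_eq_mul]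
        congr 1
        have : M + 3 + 1 - M = 4 := by omega
        rw [this]; norm_num

end Digits

/-! ### Hausdorff measure of cylinders -/

section Cylinders

variable {b m : ℕ} {ω : ℕ → Fin m → Fin b} {q s : ℝ} {k : ℕ}

/-- The part of the survivor set whose points have an admissible expansion beginning with
`u₀ … u_{k-1}`. -/
def Cyl (ω : ℕ → Fin m → Fin b) (k : ℕ) (u : ℕ → Fin b) : Set ℝ :=
  {x | ∃ d : ℕ → Fin b, (∀ n, Adm ω n d) ∧ (∀ i < k, d i = u i) ∧ x = Real.ofDigits d}

lemma mem_Kset {x : ℝ} : x ∈ Kset b m ω ↔ ∃ d : ℕ → Fin b, (∀ n, Adm ω n d) ∧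
    x = Real.ofDigits d := by
  have h : ∀ d : ℕ → Fin b, (∀ n, Adm ω n d) ↔
      ∀ k : ℕ, (fun j : Fin m => d (k + j.1)) ≠ ω k :=
    fun d => ⟨fun h k => h (k + m) k le_rfl, fun h n i _ => h i⟩
  simp only [h]
  exact Iff.rfl

lemma Cyl_subset_Kset {u : ℕ → Fin b} : Cyl ω k u ⊆ Kset b m ω := by
  rintro x ⟨d, h1, -, h2⟩
  exact mem_Kset.2 ⟨d, h1, h2⟩

lemma Cyl_eq_empty {u : ℕ → Fin b} (hu : ¬ Adm ω k u) : Cyl ω k u = ∅ := by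
  ext x
  simp only [Set.mem_empty_iff_false, iff_false]
  rintro ⟨d, h1, h2, -⟩
  exact hu ((h1 k).congr h2)

lemma dist_le_of_mem_Cyl {u : ℕ → Fin b} {x y : ℝ} (hx : x ∈ Cyl ω k u) (hy : y ∈ Cyl ω k u) :
    dist x y ≤ ((b : ℝ) ^ k)⁻¹ := by
  obtain ⟨d, -, h1, rfl⟩ := hx
  obtain ⟨e, -, h2, rfl⟩ := hy
  exact Real.abs_ofDigits_sub_ofDigits_le fun i hi => (h1 i hi).trans (h2 i hi).symm

lemma ediam_Cyl {u : ℕ → Fin b} : Metric.ediam (Cyl ω k u) ≤ ENNReal.ofReal ((b : ℝ) ^ k)⁻¹ :=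
  Metric.ediam_le_of_forall_dist_le fun _ hx _ hy => dist_le_of_mem_Cyl hx hy

lemma Cyl_subset_iUnion {u : ℕ → Fin b} :
    Cyl ω k u ⊆ ⋃ a : Fin b, Cyl ω (k + 1) (Function.update u k a) := by
  rintro x ⟨d, h1, h2, h3⟩
  refine Set.mem_iUnion.2 ⟨d k, d, h1, fun i hi => ?_, h3⟩
  rcases Nat.lt_succ_iff_lt_or_eq.1 hi with h | rfl
  · rw [Function.update_of_ne (by omega), h2 i h]
  · simp

lemma inv_pow_rpow (hb : 0 < b) (hs : (b : ℝ) ^ s = q⁻¹) (n : ℕ) :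
    (((b : ℝ) ^ n)⁻¹) ^ s = q ^ n := by
  have hb' : (0 : ℝ) < b := by exact_mod_cast hb
  rw [Real.inv_rpow (by positivity), ← Real.rpow_natCast, ← Real.rpow_mul hb'.le, mul_comm,
    Real.rpow_mul hb'.le, hs, Real.rpow_natCast, inv_pow, inv_inv]

/-- A cylinder has Hausdorff measure at most a constant times its weight. On levels whose
cylinders have diameter at most `ρ` this bounds the size-`ρ` premeasure by a single-set cover, and
additivity of the weight carries the bound down to all smaller levels. -/
lemma hausdorff_Cyl_le (hb : 2 ≤ b) (hs0 : 0 ≤ s) (hs : (b : ℝ) ^ s = q⁻¹)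
    (hq : 0 < q) (hq2 : q < 1 / 2)
    (hsum : ∀ (k : ℕ) (d : ℕ → Fin b),
      ∑ a : Fin b, wt q ω (k + 1) (Function.update d k a) = wt q ω k d)
    (k : ℕ) (u : ℕ → Fin b) :
    Measure.hausdorffMeasure s (Cyl ω k u) ≤
      ENNReal.ofReal ((1 - q / (1 - q))⁻¹ * wt q ω k u) := by
  set c := 1 - q / (1 - q) with hc
  have hc0 : 0 < c := by
    have : q / (1 - q) < 1 := by rw [div_lt_one (by linarith)]; linarith
    linarith
  rw [Measure.hausdorffMeasure, ← OuterMeasure.coe_mkMetric, OuterMeasure.mkMetric,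
    OuterMeasure.mkMetric']
  simp only [OuterMeasure.iSup_apply]
  refine iSup₂_le fun ρ hρ => ?_
  have hb1 : (1 : ℝ) < b := by exact_mod_cast (by omega : 1 < b)
  obtain ⟨n0, hn0⟩ : ∃ n0 : ℕ, ∀ n, n0 ≤ n → ENNReal.ofReal ((b : ℝ) ^ n)⁻¹ ≤ ρ := by
    have h1 : Tendsto (fun n : ℕ => ENNReal.ofReal ((b : ℝ) ^ n)⁻¹) atTop (nhds 0) := by
      rw [← ENNReal.ofReal_zero]
      refine ENNReal.tendsto_ofReal ?_
      exact tendsto_inv_atTop_zero.comp (tendsto_pow_atTop_atTop_of_one_lt hb1)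
    obtain ⟨n0, h⟩ := eventually_atTop.1 (h1.eventually_le_const hρ)
    exact ⟨n0, h⟩
  have key : ∀ (j k : ℕ) (u : ℕ → Fin b), n0 ≤ k + j →
      OuterMeasure.mkMetric'.pre (fun A : Set ℝ => Metric.ediam A ^ s) ρ (Cyl ω k u) ≤
        ENNReal.ofReal (c⁻¹ * wt q ω k u) := by
    intro j
    induction j with
    | zero =>
      intro k u hk
      by_cases hu : Adm ω k u
      · refine (OuterMeasure.mkMetric'.pre_le (ediam_Cyl.trans (hn0 k hk))).trans ?_
        calc _ ≤ ENNReal.ofReal ((b : ℝ) ^ k)⁻¹ ^ s := ENNReal.rpow_le_rpow ediam_Cyl hs0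
          _ = ENNReal.ofReal (q ^ k) := by
            rw [ENNReal.ofReal_rpow_of_nonneg (by positivity) hs0, inv_pow_rpow (by omega) hs]
          _ ≤ _ := by
            refine ENNReal.ofReal_le_ofReal ?_
            rw [← div_eq_inv_mul, le_div_iff₀ hc0, mul_comm]
            exact le_wt hq.le (by linarith) hu
      · rw [Cyl_eq_empty hu, measure_empty]
        exact zero_le
    | succ j ih =>
      intro k u hk
      calc _ ≤ _ := measure_mono Cyl_subset_iUnion
        _ ≤ ∑ a : Fin b, _ := measure_iUnion_fintype_le _ _
        _ ≤ ∑ a : Fin b, ENNReal.ofReal (c⁻¹ * wt q ω (k + 1) (Function.update u k a)) :=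
          Finset.sum_le_sum fun a _ => ih _ _ (by omega)
        _ = _ := by
          rw [← ENNReal.ofReal_sum_of_nonneg, ← Finset.mul_sum, hsum]
          exact fun a _ => mul_nonneg (inv_nonneg.2 hc0.le) (wt_nonneg hq.le hq2)
  exact key n0 k u (by omega)

/-- A cylinder has Hausdorff measure at least a constant times its weight: mass distribution
principle, for the pushforward of Lebesgue measure on the interval of the word under a map sending
a point to an admissible digit sequence in whose intervals it lies. Working with outer measures
makes measurability of that map irrelevant. -/
lemma le_hausdorff_Cyl (hb : 2 ≤ b) (hs0 : 0 < s) (hs : (b : ℝ) ^ s = q⁻¹)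
    (hq : 0 < q) (hq2 : q < 1 / 2)
    (hsum : ∀ (k : ℕ) (d : ℕ → Fin b),
      ∑ a : Fin b, wt q ω (k + 1) (Function.update d k a) = wt q ω k d)
    (k : ℕ) (u : ℕ → Fin b) :
    ENNReal.ofReal (q / 4 * wt q ω k u) ≤ Measure.hausdorffMeasure s (Cyl ω k u) := by
  have hb1 : (1 : ℝ) < b := by exact_mod_cast (by omega : 1 < b)
  have hb0 : (0 : ℝ) < b := by linarith
  have hex : ∀ t : ℝ, ∃ d : ℕ → Fin b, t ∈ Jint q ω k u →
      (∀ i < k, d i = u i) ∧ ∀ n, k ≤ n → t ∈ Jint q ω n d := by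
    intro t
    by_cases ht : t ∈ Jint q ω k u
    · obtain ⟨d, hd⟩ := exists_digits hsum ht
      exact ⟨d, fun _ => hd⟩
    · exact ⟨u, fun h => absurd h ht⟩
  choose f hf using hex
  let ν : OuterMeasure ℝ := OuterMeasure.restrict (Jint q ω k u) (volume : Measure ℝ).toOuterMeasure
  let μ : OuterMeasure ℝ := OuterMeasure.map (fun t => Real.ofDigits (f t)) ν
  -- The pushforward gives mass at most `4 q ^ n` to sets of diameter at most `b⁻ⁿ`.
  have hμ : ∀ n, k ≤ n → ∀ A : Set ℝ, Metric.ediam A ≤ ENNReal.ofReal ((b : ℝ) ^ n)⁻¹ →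
      μ A ≤ 4 * ENNReal.ofReal (q ^ n) := by
    intro n hn A hA
    rcases ((fun t => Real.ofDigits (f t)) ⁻¹' A).eq_empty_or_nonempty with h | ⟨t0, ht0⟩
    · change ν (_ ⁻¹' A) ≤ _
      rw [h, measure_empty]; exact zero_le
    · refine outer_le_four ν _ f (Real.ofDigits_nonneg (f t0)) n ?_ _ ?_
      · intro t ht
        have h1 := (Metric.edist_le_ediam_of_mem (s := A) ht ht0).trans hA
        rw [edist_dist, ENNReal.ofReal_le_ofReal_iff (by positivity)] at h1
        exact h1
      · intro v
        change (OuterMeasure.restrict (Jint q ω k u) (volume : Measure ℝ).toOuterMeasure) _ ≤ _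
        rw [OuterMeasure.restrict_apply]
        refine (measure_mono (?_ : _ ⊆ Jint q ω n v)).trans ?_
        · rintro t ⟨⟨-, h1⟩, h2⟩
          rw [← Jint_congr h1]
          exact (hf t h2).2 n hn
        · change volume (Jint q ω n v) ≤ _
          rw [volume_Jint]
          exact ENNReal.ofReal_le_ofReal (wt_le hq.le)
  have hμ' : ∀ A : Set ℝ, Metric.ediam A ≤ ENNReal.ofReal ((b : ℝ) ^ k)⁻¹ →
      (ENNReal.ofReal (q / 4) • μ) A ≤ Metric.ediam A ^ s := by
    intro A hA
    rw [_root_.smul_apply, smul_eq_mul]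
    have hfin : Metric.ediam A ≠ ⊤ := ne_top_of_le_ne_top ENNReal.ofReal_ne_top hA
    obtain ⟨δ, hδ0, hδ⟩ : ∃ δ : ℝ, 0 ≤ δ ∧ Metric.ediam A = ENNReal.ofReal δ :=
      ⟨_, ENNReal.toReal_nonneg, (ENNReal.ofReal_toReal hfin).symm⟩
    rcases hδ0.eq_or_lt with h0 | hpos
    · -- Sets of diameter zero are null: let the level tend to infinity.
      have hz : Metric.ediam A = 0 := by rw [hδ, ← h0, ENNReal.ofReal_zero]
      have hlim : Tendsto (fun n : ℕ => 4 * ENNReal.ofReal (q ^ n)) atTop (nhds 0) := by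
        have h1 : Tendsto (fun n : ℕ => ENNReal.ofReal (q ^ n)) atTop (nhds 0) := by
          rw [← ENNReal.ofReal_zero]
          exact ENNReal.tendsto_ofReal (tendsto_pow_atTop_nhds_zero_of_lt_one hq.le (by linarith))
        simpa using ENNReal.Tendsto.const_mul h1 (Or.inr (by norm_num : (4 : ENNReal) ≠ ⊤))
      have : μ A ≤ 0 := ge_of_tendsto hlim
        (eventually_atTop.2 ⟨k, fun n hn => hμ n hn A (by rw [hz]; exact zero_le)⟩)
      rw [nonpos_iff_eq_zero.1 this, mul_zero]
      exact zero_le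
    · rw [hδ, ENNReal.ofReal_le_ofReal_iff (by positivity)] at hA
      have hk1 : ((b : ℝ) ^ k)⁻¹ ≤ 1 := inv_le_one_of_one_le₀ (one_le_pow₀ hb1.le)
      obtain ⟨n, hn1, hn2⟩ := exists_nat_pow_near_of_lt_one hpos (hA.trans hk1)
        (inv_pos.2 hb0) (inv_lt_one_of_one_lt₀ hb1)
      rw [inv_pow] at hn1 hn2
      have hkn : k ≤ n := by
        have h1 := hn1.trans_le hA
        rw [inv_lt_inv₀ (by positivity) (by positivity)] at h1
        have := (pow_lt_pow_iff_right₀ hb1).1 h1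
        omega
      calc _ ≤ ENNReal.ofReal (q / 4) * (4 * ENNReal.ofReal (q ^ n)) := by
            gcongr
            exact hμ n hkn A (by rw [hδ]; exact ENNReal.ofReal_le_ofReal hn2)
        _ = ENNReal.ofReal (q ^ (n + 1)) := by
            have : (4 : ENNReal) = ENNReal.ofReal 4 := by norm_num
            rw [this, ← ENNReal.ofReal_mul (by norm_num), ← ENNReal.ofReal_mul (by positivity)]
            congr 1; ring
        _ ≤ ENNReal.ofReal (δ ^ s) := by
            refine ENNReal.ofReal_le_ofReal ?_
            rw [← inv_pow_rpow (by omega) hs]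
            exact Real.rpow_le_rpow (by positivity) hn1.le hs0.le
        _ = _ := by rw [hδ, ENNReal.ofReal_rpow_of_nonneg hδ0 hs0.le]
  have hle := OuterMeasure.le_mkMetric (fun r => r ^ s) _ _
    (ENNReal.ofReal_pos.2 (by positivity)) hμ' (Cyl ω k u)
  rw [Measure.hausdorffMeasure, ← OuterMeasure.coe_mkMetric]
  refine le_trans ?_ hle
  rw [_root_.smul_apply, smul_eq_mul, ENNReal.ofReal_mul (by positivity), ← volume_Jint]
  gcongr
  change _ ≤ (OuterMeasure.restrict (Jint q ω k u) (volume : Measure ℝ).toOuterMeasure) _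
  rw [OuterMeasure.restrict_apply]
  refine measure_mono (fun t ht => ⟨?_, ht⟩)
  obtain ⟨h1, h2⟩ := hf t ht
  exact ⟨f t, fun n => (adm_of_mem_Jint (h2 (max n k) (le_max_right _ _))).mono (le_max_left _ _),
    h1, rfl⟩

end Cylinders

/-! ### Ahlfors regularity -/

/-- **Theorem 1.2 (ii).** If `ω` is totally distinct, then `K^ω` is
`(log η / log b)`-Ahlfors regular, where `η ∈ (b-1, b)` is the root of
`x^m = b x^{m-1} - 1`. -/
theorem ahlfors_regular_of_totally_distinct (b m : ℕ) (hb : 3 ≤ b) (hm : 2 ≤ m)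
    (ω : ℕ → Fin m → Fin b) (hω : ∀ k : ℕ, 1 ≤ k → TotDistinctAt b m ω k)
    (eta : ℝ) (heta1 : (b : ℝ) - 1 < eta) (heta2 : eta < (b : ℝ))
    (heta : eta ^ m = (b : ℝ) * eta ^ (m - 1) - 1) :
    AhlforsRegular (Kset b m ω) (Real.log eta / Real.log b) := by
  set q := eta⁻¹ with hqdef
  have hb3 : (3 : ℝ) ≤ b := by exact_mod_cast hb
  have he2 : 2 < eta := by linarith
  have he0 : 0 < eta := by linarith
  have hq : 0 < q := inv_pos.2 he0
  have hq2 : q < 1 / 2 := by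
    rw [hqdef, inv_eq_one_div]
    exact one_div_lt_one_div_of_lt (by norm_num) he2
  have hqe : q⁻¹ = eta := inv_inv _
  have heq : (b : ℝ) = q⁻¹ + q ^ (m - 1) := by
    obtain ⟨n, rfl⟩ : ∃ n, m = n + 1 := ⟨m - 1, by omega⟩
    simp only [Nat.add_sub_cancel] at heta ⊢
    rw [hqe, hqdef, inv_pow]
    rw [pow_succ] at heta
    field_simp
    linarith
  have hsum := sum_wt hm hω hq.ne' heq
  have hlogb : 0 < Real.log b := Real.log_pos (by linarith)
  set s := Real.log eta / Real.log b with hsdef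
  have hs0 : 0 < s := div_pos (Real.log_pos (by linarith)) hlogb
  have hs : (b : ℝ) ^ s = q⁻¹ := by
    rw [hqe, Real.rpow_def_of_pos (by linarith), hsdef, mul_div_cancel₀ _ hlogb.ne',
      Real.exp_log he0]
  set c := 1 - q / (1 - q) with hc
  have hc0 : 0 < c := by
    have : q / (1 - q) < 1 := by rw [div_lt_one (by linarith)]; linarith
    linarith
  have hc1 : c ≤ 1 := by
    have : 0 ≤ q / (1 - q) := div_nonneg hq.le (by linarith)
    linarith
  refine ⟨4 / (c * q ^ 2), ?_, ?_⟩
  · rw [one_le_div (by positivity)]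
    have : q ^ 2 ≤ 1 := pow_le_one₀ hq.le (by linarith)
    nlinarith
  intro x hx r hr0 hr1
  obtain ⟨d, hd, rfl⟩ := mem_Kset.1 hx
  have hb1 : (1 : ℝ) < b := by linarith
  have hb0 : (0 : ℝ) < b := by linarith
  obtain ⟨n, hn1, hn2⟩ := exists_nat_pow_near_of_lt_one hr0 hr1.le
    (inv_pos.2 hb0) (inv_lt_one_of_one_lt₀ hb1)
  rw [inv_pow] at hn1 hn2
  have hr1' : q ^ (n + 1) ≤ r ^ s := by
    rw [← inv_pow_rpow (by omega) hs]
    exact Real.rpow_le_rpow (by positivity) hn1.le hs0.le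
  have hr2' : r ^ s ≤ q ^ n := by
    rw [← inv_pow_rpow (by omega) hs]
    exact Real.rpow_le_rpow hr0.le hn2 hs0.le
  constructor
  · -- The ball contains the cylinder of level `n + 1` of its centre.
    calc _ ≤ ENNReal.ofReal (q / 4 * wt q ω (n + 1) d) := by
          refine ENNReal.ofReal_le_ofReal ?_
          calc _ ≤ (4 / (c * q ^ 2))⁻¹ * q ^ n := by gcongr
            _ = q / 4 * (c * q ^ (n + 1)) := by
              rw [inv_div, pow_succ]; ring
            _ ≤ _ := by
              gcongr
              exact le_wt hq.le (by linarith) (hd _)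
      _ ≤ _ := le_hausdorff_Cyl (by omega) hs0 hs hq hq2 hsum (n + 1) d
      _ ≤ _ := by
          refine measure_mono fun y hy => ⟨Cyl_subset_Kset hy, ?_⟩
          rw [Metric.mem_closedBall]
          exact (dist_le_of_mem_Cyl hy ⟨d, hd, fun _ _ => rfl, rfl⟩).trans hn1.le
  · -- The ball meets at most four cylinders of level `n`.
    have hex : ∀ y : ℝ, ∃ e : ℕ → Fin b, y ∈ Kset b m ω →
        (∀ n, Adm ω n e) ∧ y = Real.ofDigits e := by
      intro y
      by_cases hy : y ∈ Kset b m ω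
      · obtain ⟨e, he⟩ := mem_Kset.1 hy
        exact ⟨e, fun _ => he⟩
      · exact ⟨d, fun h => absurd h hy⟩
    choose f hf using hex
    calc _ ≤ 4 * ENNReal.ofReal (c⁻¹ * q ^ n) := by
          refine outer_le_four (Measure.hausdorffMeasure s).toOuterMeasure _ f
            (Real.ofDigits_nonneg d) n ?_ _ ?_
          · rintro y ⟨hy, hyb⟩
            rw [← (hf y hy).2]
            exact (Metric.mem_closedBall.1 hyb).trans hn2
          · intro u
            refine (measure_mono (?_ : _ ⊆ Cyl ω n u)).trans
              ((hausdorff_Cyl_le (by omega) hs0.le hs hq hq2 hsum n u).trans ?_)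
            · rintro y ⟨⟨hy, -⟩, h⟩
              exact ⟨f y, (hf y hy).1, h, (hf y hy).2⟩
            · refine ENNReal.ofReal_le_ofReal ?_
              gcongr
              exact wt_le hq.le
      _ = ENNReal.ofReal (4 / (c * q) * q ^ (n + 1)) := by
          have : (4 : ENNReal) = ENNReal.ofReal 4 := by norm_num
          rw [this, ← ENNReal.ofReal_mul (by norm_num), pow_succ]
          congr 1
          field_simp
      _ ≤ _ := by
          refine ENNReal.ofReal_le_ofReal ?_
          have hq1 : q ^ 2 ≤ q := by nlinarith
          gcongr

end Paper
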